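/- For all natural numbers L < R, the number of maximal aligned dyadic intervals contained in [L,R) is at most 2·(⌊log₂(R−L)⌋ + 1). -/

import Mathlib

/-- An aligned dyadic interval of naturals: `[a·2^k, (a+1)·2^k)`. -/
def IsDyadic (I : Set ℕ) : Prop :=
  ∃ a k : ℕ, I = Set.Ico (a * 2 ^ k) ((a + 1) * 2 ^ k)

/-- The compact range of `[L, R)`: the set of maximal aligned dyadic intervals
contained in `[L, R)`. -/
def CompactRange (L R : ℕ) : Set (Set ℕ) :=
  {I | IsDyadic I ∧ I ⊆ Set.Ico L R ∧
    ∀ J : Set ℕ, IsDyadic J → J ⊆ Set.Ico L R → I ⊆ J → I = J}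

/-!
The intervals `2b` and `2b + 1` of level `k` are the two halves of interval `b` of level `k + 1`, so
the sibling of a maximal interval sticks out of `[L, R)`. For an even index this forces the
interval to be the last one of its level inside `[L, R)`, for an odd index the first one. Hence each
level contributes at most two intervals, and a level `k` that contributes satisfies `2^k ≤ R - L`.
-/

/-- The aligned dyadic interval of index `a` and level `k`: block number `a`, counted from zero, in
the partition of `ℕ` into blocks of length `2^k`. -/
def dyadicIco (a k : ℕ) : Set ℕ :=
  Set.Ico (a * 2 ^ k) ((a + 1) * 2 ^ k)

section DyadicIco

variable {a b k L R : ℕ}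

theorem isDyadic_dyadicIco (a k : ℕ) : IsDyadic (dyadicIco a k) :=
  ⟨a, k, rfl⟩

theorem dyadicIco_subset_Ico_iff :
    dyadicIco a k ⊆ Set.Ico L R ↔ L ≤ a * 2 ^ k ∧ (a + 1) * 2 ^ k ≤ R :=
  Set.Ico_subset_Ico_iff (Nat.mul_lt_mul_of_pos_right a.lt_succ_self (by positivity))

theorem dyadicIco_subset_dyadicIco_iff : dyadicIco a k ⊆ dyadicIco b k ↔ a = b := by
  have hk : 0 < 2 ^ k := by positivity
  rw [dyadicIco.eq_def b, dyadicIco_subset_Ico_iff, Nat.mul_le_mul_right_iff hk,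
    Nat.mul_le_mul_right_iff hk]
  omega

theorem dyadicIco_two_mul_union (b k : ℕ) :
    dyadicIco (2 * b) k ∪ dyadicIco (2 * b + 1) k = dyadicIco b (k + 1) := by
  unfold dyadicIco
  rw [Set.Ico_union_Ico_eq_Ico (by gcongr; omega) (by gcongr; omega)]
  congr 1 <;> ring

theorem le_log_of_dyadicIco_subset_Ico (h : dyadicIco a k ⊆ Set.Ico L R) :
    k ≤ Nat.log 2 (R - L) := by
  obtain ⟨hL, hR⟩ := dyadicIco_subset_Ico_iff.mp h
  rw [add_one_mul] at hR
  exact Nat.le_log_of_pow_le one_lt_two (by omega)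

end DyadicIco

namespace CompactRange

variable {a b k L R : ℕ} {I J : Set ℕ}

theorem subset_of_isDyadic_union (hI : I ∈ CompactRange L R) (hJ : J ⊆ Set.Ico L R)
    (hIJ : IsDyadic (I ∪ J)) : J ⊆ I := by
  obtain ⟨-, hsub, hmax⟩ := hI
  exact Set.union_eq_left.mp (hmax _ hIJ (Set.union_subset hsub hJ) Set.subset_union_left).symm

theorem right_sibling_not_subset (h : dyadicIco (2 * b) k ∈ CompactRange L R) :
    ¬ dyadicIco (2 * b + 1) k ⊆ Set.Ico L R := fun hsib ↦ by
  have hsub := subset_of_isDyadic_union h hsib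
    (dyadicIco_two_mul_union b k ▸ isDyadic_dyadicIco b (k + 1))
  have := dyadicIco_subset_dyadicIco_iff.mp hsub
  omega

theorem left_sibling_not_subset (h : dyadicIco (2 * b + 1) k ∈ CompactRange L R) :
    ¬ dyadicIco (2 * b) k ⊆ Set.Ico L R := fun hsib ↦ by
  have hsub := subset_of_isDyadic_union h hsib
    (Set.union_comm _ _ ▸ dyadicIco_two_mul_union b k ▸ isDyadic_dyadicIco b (k + 1))
  have := dyadicIco_subset_dyadicIco_iff.mp hsub
  omega

theorem add_one_eq_div_of_even (h : dyadicIco a k ∈ CompactRange L R) (ha : Even a) :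
    a + 1 = R / 2 ^ k := by
  obtain ⟨b, rfl⟩ := ha.two_dvd
  obtain ⟨hL, hR⟩ := dyadicIco_subset_Ico_iff.mp h.2.1
  have hlt : R < (2 * b + 1 + 1) * 2 ^ k := by
    by_contra! hle
    exact right_sibling_not_subset h
      (dyadicIco_subset_Ico_iff.mpr ⟨hL.trans (by gcongr; omega), hle⟩)
  exact (Nat.div_eq_of_lt_le hR hlt).symm

theorem eq_ceilDiv_of_odd (h : dyadicIco a k ∈ CompactRange L R) (ha : Odd a) :
    a = L ⌈/⌉ 2 ^ k := by
  obtain ⟨b, rfl⟩ := ha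
  have hk : 0 < 2 ^ k := by positivity
  obtain ⟨hL, hR⟩ := dyadicIco_subset_Ico_iff.mp h.2.1
  have hlt : 2 * b * 2 ^ k < L := by
    by_contra! hle
    exact left_sibling_not_subset h
      (dyadicIco_subset_Ico_iff.mpr ⟨hle, le_trans (by gcongr; omega) hR⟩)
  rw [mul_comm _ (2 ^ k)] at hL hlt
  exact le_antisymm
    (Nat.succ_le_of_lt ((lt_iff_lt_of_le_iff_le (ceilDiv_le_iff_le_mul hk)).mpr hlt))
    ((ceilDiv_le_iff_le_mul hk).mpr hL)

open scoped Classical in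
theorem subset_biUnion_pair (L R : ℕ) :
    CompactRange L R ⊆ ↑((Finset.range (Nat.log 2 (R - L) + 1)).biUnion fun k ↦
      {dyadicIco (R / 2 ^ k - 1) k, dyadicIco (L ⌈/⌉ 2 ^ k) k}) := by
  intro I hI
  obtain ⟨a, k, rfl : I = dyadicIco a k⟩ := hI.1
  rw [Finset.mem_coe, Finset.mem_biUnion]
  refine ⟨k, Finset.mem_range_succ_iff.mpr (le_log_of_dyadicIco_subset_Ico hI.2.1), ?_⟩
  rw [Finset.mem_insert, Finset.mem_singleton]
  rcases a.even_or_odd with ha | ha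
  · exact .inl (by rw [← add_one_eq_div_of_even hI ha, Nat.add_sub_cancel])
  · exact .inr (by rw [← eq_ceilDiv_of_odd hI ha])

end CompactRange

/-- The compact range of `[L, R)` has at most `2·(⌊log₂(R−L)⌋ + 1)` elements. -/
theorem compactRange_card_le (L R : ℕ) (h : L < R) :
    (CompactRange L R).encard ≤ ((2 * (Nat.log 2 (R - L) + 1) : ℕ) : ℕ∞) := by
  classical
  refine (Set.encard_le_encard (CompactRange.subset_biUnion_pair L R)).trans ?_
  rw [Set.encard_coe_eq_coe_finsetCard, Nat.cast_le, mul_comm]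
  simpa only [Finset.card_range] using
    Finset.card_biUnion_le_card_mul (Finset.range (Nat.log 2 (R - L) + 1)) _ 2
      fun _ _ ↦ Finset.card_le_two
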